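/- A left self-injective semiprimary ring A such that the cardinality of A/Jac(A) is strictly smaller than the cardinality of A is quasi-Frobenius. -/

import Mathlib

open Cardinal

/-- A ring is *semiprimary* if its Jacobson radical `J` is nilpotent
(`J ^ n = 0`, expressed elementwise: every product of `n` elements of `J` vanishes)
and the quotient ring `A / J` is a semisimple ring. -/
def IsSemiprimary (A : Type*) [Ring A] : Prop :=
  IsSemisimpleRing (RingCon.Quotient (⊥ : TwoSidedIdeal A).jacobson.ringCon) ∧
  ∃ n : ℕ, 0 < n ∧ ∀ f : Fin n → A,
    (∀ i, f i ∈ Ideal.jacobson (⊥ : Ideal A)) → (List.ofFn f).prod = 0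

/-- A ring is *quasi-Frobenius* if it is left self-injective and left artinian. -/
def IsQuasiFrobenius (A : Type*) [Ring A] : Prop :=
  Module.Injective A A ∧ IsArtinianRing A

namespace FaithQF

universe u

set_option linter.unusedSectionVars false

theorem isSemiprimaryRing_of (A : Type u) [Ring A] (h : IsSemiprimary A) :
    IsSemiprimaryRing A := by
  obtain ⟨hss, n, hn, hf⟩ := h
  have key : ∀ x, x ∈ (⊥ : TwoSidedIdeal A).jacobson ↔ x ∈ Ring.jacobson A := by
    intro x
    rw [← Ideal.jacobson_bot, TwoSidedIdeal.mem_jacobson_iff, Ideal.mem_jacobson_iff]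
    simp
  refine ⟨?_, n, ?_⟩
  · let φ : RingCon.Quotient (⊥ : TwoSidedIdeal A).jacobson.ringCon →+* A ⧸ Ring.jacobson A :=
      RingCon.lift _ (Ideal.Quotient.mk (Ring.jacobson A)) (by
        intro x y hxy
        rw [RingCon.ker_apply]
        rw [Ideal.Quotient.mk_eq_mk_iff_sub_mem, ← key]
        exact (TwoSidedIdeal.rel_iff _ _ _).1 hxy)
    refine φ.isSemisimpleRing_of_surjective ?_
    intro y
    obtain ⟨x, rfl⟩ := Ideal.Quotient.mk_surjective y
    exact ⟨(⊥ : TwoSidedIdeal A).jacobson.ringCon.mk' x, rfl⟩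
  · rw [Ideal.jacobson_bot] at hf
    have main : ∀ k : ℕ, ∀ l : List A, (∀ a ∈ l, a ∈ Ring.jacobson A) → k + l.length = n →
        ∀ x ∈ Ring.jacobson A ^ k, x * l.prod = 0 := by
      intro k
      induction k with
      | zero =>
        intro l hl hlen x _
        have hlen' : l.length = n := by omega
        subst hlen'
        have := hf l.get (fun i => hl _ (List.get_mem _ _))
        rw [List.ofFn_get] at this
        rw [this, mul_zero]
      | succ k ih =>
        intro l hl hlen x hx
        rw [Submodule.pow_succ] at hx
        refine Submodule.mul_induction_on hx ?_ ?_
        · intro a ha b hb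
          have := ih (b :: l) (by simpa using ⟨hb, hl⟩) (by simp; omega) a ha
          simpa [mul_assoc] using this
        · intro a b ha hb
          rw [add_mul, ha, hb, add_zero]
    rw [Ideal.zero_eq_bot, eq_bot_iff]
    intro x hx
    have := main n [] (by simp) (by simp) x hx
    simpa using this

section

variable {A : Type u} [Ring A] [IsSemiprimaryRing A]

theorem ss_of_torsion (M : Type*) [AddCommGroup M] [Module A M]
    (h : ∀ j ∈ Ring.jacobson A, ∀ m : M, j • m = 0) : IsSemisimpleModule A M := by
  have h' : Module.IsTorsionBySet A M (Ring.jacobson A) := fun m a => h a a.2 m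
  let _ := h'.module
  exact (h'.semilinearMap.isSemisimpleModule_iff_of_bijective Function.bijective_id).2
      inferInstance

theorem exists_simple_le (I : Ideal A) (hI : I ≠ ⊥) : ∃ U ≤ I, IsSimpleModule A U := by
  classical
  obtain ⟨n, hn⟩ := IsSemiprimaryRing.isNilpotent (R := A)
  have hex : ∃ k, Ring.jacobson A ^ k * I = ⊥ := ⟨n, by rw [hn]; simp⟩
  have h0 : Nat.find hex ≠ 0 := by
    intro h
    have := Nat.find_spec hex
    rw [h] at this
    rw [Submodule.pow_zero, Ideal.one_eq_top, Ideal.top_mul] at this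
    exact hI this
  obtain ⟨k, hk⟩ := Nat.exists_eq_succ_of_ne_zero h0
  have h1 : Ring.jacobson A ^ k * I ≠ ⊥ := Nat.find_min hex (by omega)
  have h2 : Ring.jacobson A * (Ring.jacobson A ^ k * I) = ⊥ := by
    rw [← mul_assoc, ← Ideal.IsTwoSided.pow_succ, ← Nat.succ_eq_add_one, ← hk]
    exact Nat.find_spec hex
  have : IsSemisimpleModule A (Ring.jacobson A ^ k * I : Ideal A) := by
    refine ss_of_torsion _ ?_
    rintro j hj ⟨m, hm⟩
    ext
    have : j * m ∈ Ring.jacobson A * (Ring.jacobson A ^ k * I) := Ideal.mul_mem_mul hj hm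
    rw [h2] at this
    simpa using this
  rcases IsSemisimpleModule.eq_bot_or_exists_simple_le (Ring.jacobson A ^ k * I : Ideal A) with
    h | ⟨m, hm, hs⟩
  · exact absurd h h1
  · exact ⟨m, hm.trans Ideal.mul_le_right, hs⟩

instance : IsSemisimpleModule A (A ⧸ Ring.jacobson A) := by
  refine ss_of_torsion _ ?_
  intro j hj m
  obtain ⟨x, rfl⟩ := Ideal.Quotient.mk_surjective m
  have : j • (Ideal.Quotient.mk (Ring.jacobson A) x) =
    Ideal.Quotient.mk (Ring.jacobson A) (j * x) := rfl
  rw [this, Ideal.Quotient.eq_zero_iff_mem]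
  exact Ideal.mul_mem_right _ _ hj

theorem simple_embeds (S : Type*) [AddCommGroup S] [Module A S] [IsSimpleModule A S] :
    ∃ P : Submodule A (A ⧸ Ring.jacobson A), Nonempty (S ≃ₗ[A] P) := by
  have := IsSimpleModule.nontrivial A S
  obtain ⟨s, hs⟩ := exists_ne (0 : S)
  let f : (A ⧸ Ring.jacobson A) →ₗ[A] S :=
    Submodule.liftQ (Ring.jacobson A) (LinearMap.toSpanSingleton A S s)
      (IsSemisimpleModule.jacobson_le_ker A A A S _)
  refine LinearMap.linearEquiv_of_ne_zero (f := f) ?_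
  intro hf
  have : f (Submodule.Quotient.mk 1) = s := by
    change Submodule.liftQ (Ring.jacobson A) (LinearMap.toSpanSingleton A S s) _
      (Submodule.Quotient.mk 1) = s
    rw [Submodule.liftQ_apply]
    simp
  rw [hf] at this
  exact hs this.symm

theorem exists_idem (P : Submodule A (A ⧸ Ring.jacobson A)) :
    ∃ e : A, IsIdempotentElem e ∧ Ideal.Quotient.mk (Ring.jacobson A) e ∈ P ∧
      ∀ x ∈ P, x * Ideal.Quotient.mk (Ring.jacobson A) e = x := by
  let P' : Ideal (A ⧸ Ring.jacobson A) :=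
    { carrier := P
      add_mem' := P.add_mem
      zero_mem' := P.zero_mem
      smul_mem' := by
        intro c x hx
        obtain ⟨c, rfl⟩ := Ideal.Quotient.mk_surjective c
        exact P.smul_mem c hx }
  obtain ⟨e, he, hP⟩ := IsSemisimpleRing.ideal_eq_span_idempotent P'
  obtain ⟨n, hn⟩ := IsSemiprimaryRing.isNilpotent (R := A)
  obtain ⟨e', he', rfl⟩ := exists_isIdempotentElem_eq_of_ker_isNilpotent
    (Ideal.Quotient.mk (Ring.jacobson A)) (by
      intro x hx
      rw [Ideal.mk_ker] at hx
      exact ⟨n, by simpa [hn] using Ideal.pow_mem_pow hx n⟩) e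
    (Ideal.Quotient.mk_surjective e) he
  refine ⟨e', he', ?_, ?_⟩
  · have : Ideal.Quotient.mk (Ring.jacobson A) e' ∈ P' := by
      rw [hP]; exact Ideal.mem_span_singleton_self _
    exact this
  · intro x hx
    have : x ∈ P' := hx
    rw [hP] at this
    obtain ⟨c, rfl⟩ := Ideal.mem_span_singleton'.1 this
    rw [mul_assoc, he.eq]

/-- Every map from a left ideal to a left self-injective ring is right multiplication. -/
theorem exists_mul (hinj : Module.Injective A A) (I : Ideal A) (g : I →ₗ[A] A) :
    ∃ a : A, ∀ x : I, g x = x * a := by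
  obtain ⟨h, hh⟩ := Module.Baer.of_injective hinj I g
  refine ⟨h 1, fun x => ?_⟩
  rw [← hh x x.2, ← smul_eq_mul, ← map_smul, smul_eq_mul, mul_one]

theorem type_inj (hinj : Module.Injective A A) (P P' : Submodule A (A ⧸ Ring.jacobson A))
    [IsSimpleModule A P] [IsSimpleModule A P'] (e e' : A)
    (heP : Ideal.Quotient.mk (Ring.jacobson A) e ∈ P)
    (heP' : Ideal.Quotient.mk (Ring.jacobson A) e' ∈ P')
    (he : IsIdempotentElem e)
    (he' : IsIdempotentElem e') (U U' : Ideal A) [IsSimpleModule A U]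
    (hU : U ≤ Ideal.span {e}) (hU' : U' ≤ Ideal.span {e'}) (φ : U ≃ₗ[A] U') :
    Nonempty (P ≃ₗ[A] P') := by
  have hUe : ∀ x ∈ U, x * e = x := by
    intro x hx
    obtain ⟨c, rfl⟩ := Ideal.mem_span_singleton'.1 (hU hx)
    rw [mul_assoc, he.eq]
  have hUe' : ∀ x ∈ U', x * e' = x := by
    intro x hx
    obtain ⟨c, rfl⟩ := Ideal.mem_span_singleton'.1 (hU' hx)
    rw [mul_assoc, he'.eq]
  obtain ⟨a, ha⟩ := exists_mul hinj U (U'.subtype ∘ₗ φ.toLinearMap)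
  obtain ⟨b, hb⟩ := exists_mul hinj U' (U.subtype ∘ₗ φ.symm.toLinearMap)
  have := IsSimpleModule.nontrivial A U
  obtain ⟨u, hu⟩ := exists_ne (0 : U)
  have hc : e * a * e' ∉ Ring.jacobson A := by
    intro hmem
    obtain ⟨n, hn⟩ := IsSemiprimaryRing.isNilpotent (R := A)
    have h1 : (u : A) * (e * a * e' * b) = u := by
      have e1 : (u : A) * a = φ u := (ha u).symm
      have e2 : (φ u : A) * b = u := by
        have := hb (φ u)
        simp at this
        exact this.symm
      rw [← mul_assoc, ← mul_assoc, ← mul_assoc, hUe _ u.2, e1, hUe' _ (φ u).2, e2]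
    have h2 : ∀ k : ℕ, (u : A) * (e * a * e' * b) ^ k = u := by
      intro k
      induction k with
      | zero => simp
      | succ k ih => rw [pow_succ, ← mul_assoc, ih, h1]
    have h3 : (e * a * e' * b) ^ n = 0 := by
      have := Ideal.pow_mem_pow (Ideal.mul_mem_right b _ hmem) n
      rw [hn] at this
      simpa using this
    have := h2 n
    rw [h3, mul_zero] at this
    exact hu (Subtype.ext this.symm)
  let m := Ideal.Quotient.mk (Ring.jacobson A)
  let ψ : P →ₗ[A] P' :=
    { toFun := fun x => ⟨(x : A ⧸ Ring.jacobson A) * m (a * e'), by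
        obtain ⟨y, hy⟩ := Ideal.Quotient.mk_surjective ((x : A ⧸ Ring.jacobson A) * m a)
        rw [map_mul, ← mul_assoc, ← hy]
        exact P'.smul_mem y heP'⟩
      map_add' := by intro x y; ext; simp [add_mul]
      map_smul' := by
        intro c x
        ext
        exact mul_assoc (m c) (x : A ⧸ Ring.jacobson A) (m (a * e')) }
  have hψ : ψ ≠ 0 := by
    intro h0
    have h1 : ψ ⟨m e, heP⟩ = 0 := by rw [h0]; rfl
    have h2 : m e * m (a * e') = 0 := congrArg Subtype.val h1
    rw [← map_mul, ← mul_assoc] at h2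
    exact hc (Ideal.Quotient.eq_zero_iff_mem.1 h2)
  exact ⟨LinearEquiv.ofBijective ψ (LinearMap.bijective_of_ne_zero hψ)⟩

theorem isotypic_eq_iff {B : Type*} [AddCommGroup B] [Module A B] (P Q : Submodule A B)
    [IsSimpleModule A P] [IsSimpleModule A Q]
    (h : isotypicComponent A B P = isotypicComponent A B Q) : Nonempty (P ≃ₗ[A] Q) := by
  have h1 := isIsotypicOfType_submodule_iff.1 (IsIsotypicOfType.isotypicComponent A B Q)
  exact h1 P (h ▸ P.le_isotypicComponent)

/-- A left self-injective semiprimary ring is left Kasch. -/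
theorem kasch (hinj : Module.Injective A A) (S : Type*) [AddCommGroup S] [Module A S]
    [IsSimpleModule A S] : ∃ f : S →ₗ[A] A, f ≠ 0 := by
  classical
  let B := A ⧸ Ring.jacobson A
  let C := isotypicComponents A B
  have hC : ∀ c : C, ∃ P : Submodule A B, IsSimpleModule A P ∧ c.1 = isotypicComponent A B P :=
    fun c => c.2
  choose P hP hPc using hC
  choose e he heP hePx using fun c => exists_idem (P c)
  have hU : ∀ c, ∃ U ≤ Ideal.span {e c}, IsSimpleModule A U := by
    intro c
    refine exists_simple_le _ ?_
    intro h
    have h0 : e c = 0 := by simpa using h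
    have := hP c
    have := IsSimpleModule.nontrivial A (P c)
    obtain ⟨x, hx⟩ := exists_ne (0 : P c)
    have h1 := hePx c x x.2
    rw [h0, map_zero, mul_zero] at h1
    exact hx (Subtype.ext h1.symm)
  choose U hUe hU using hU
  choose Q φ using fun c => simple_embeds (A := A) (U c)
  have hQ : ∀ c, IsSimpleModule A (Q c) := fun c => (φ c).some.symm.isSimpleModule_iff.2 (hU c)
  let σ : C → C := fun c => ⟨isotypicComponent A B (Q c), Q c, hQ c, rfl⟩
  have hσ : Function.Injective σ := by
    intro c d hcd
    have h1 : isotypicComponent A B (Q c) = isotypicComponent A B (Q d) := congrArg Subtype.val hcd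
    obtain ⟨ψ⟩ := isotypic_eq_iff _ _ h1
    obtain ⟨χ⟩ := type_inj hinj (P c) (P d) (e c) (e d) (heP c) (heP d) (he c) (he d)
      (U c) (U d) (hUe c) (hUe d) ((φ c).some.trans (ψ.trans (φ d).some.symm))
    apply Subtype.ext
    rw [hPc c, hPc d]
    exact χ.isotypicComponent_eq
  have hσ' : Function.Surjective σ := Finite.surjective_of_injective hσ
  obtain ⟨T, ⟨τ⟩⟩ := simple_embeds (A := A) S
  have hT : IsSimpleModule A T := τ.symm.isSimpleModule_iff.2 inferInstance
  obtain ⟨c, hc⟩ := hσ' ⟨isotypicComponent A B T, T, hT, rfl⟩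
  have h1 : isotypicComponent A B (Q c) = isotypicComponent A B T := congrArg Subtype.val hc
  obtain ⟨ψ⟩ := isotypic_eq_iff _ _ h1
  let χ : S ≃ₗ[A] U c := τ.trans (ψ.symm.trans (φ c).some.symm)
  refine ⟨(U c).subtype ∘ₗ χ.toLinearMap, ?_⟩
  intro h
  have := IsSimpleModule.nontrivial A S
  obtain ⟨s, hs⟩ := exists_ne (0 : S)
  have h2 := LinearMap.congr_fun h s
  simp at h2
  exact hs h2

theorem nilp_nakayama (N : Ideal A) (hN : Ring.jacobson A ≤ N ⊔ Ring.jacobson A * Ring.jacobson A) :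
    Ring.jacobson A ≤ N := by
  obtain ⟨n, hn⟩ := IsSemiprimaryRing.isNilpotent (R := A)
  have h : ∀ k : ℕ, Ring.jacobson A ≤ N ⊔ Ring.jacobson A ^ k := by
    intro k
    induction k with
    | zero =>
      rw [Submodule.pow_zero, Ideal.one_eq_top]
      simp
    | succ k ih =>
      refine hN.trans (sup_le le_sup_left ?_)
      refine (Ideal.mul_mono_right ih).trans ?_
      rw [Ideal.mul_sup, Ideal.IsTwoSided.pow_succ]
      exact sup_le_sup_right Ideal.mul_le_right _
  have := h n
  rw [hn] at this
  simpa using this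

theorem structure_lemma (hinj : Module.Injective A A) :
    ∃ (s : Type u) (g : s → A) (F : Set s → (Ring.jacobson A →ₗ[A] A)),
      Ideal.span (Set.range g) = Ring.jacobson A ∧ Function.Injective F := by
  classical
  let J := Ring.jacobson A
  let K : Submodule A J := J • ⊤
  have hss : IsSemisimpleModule A (J ⧸ K) := by
    refine ss_of_torsion _ ?_
    intro j hj m
    obtain ⟨x, rfl⟩ := Submodule.Quotient.mk_surjective _ m
    rw [← Submodule.Quotient.mk_smul, Submodule.Quotient.mk_eq_zero]
    exact Submodule.smul_mem_smul hj trivial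
  obtain ⟨s, E, hs, simple⟩ := IsSemisimpleModule.exists_linearEquiv_dfinsupp A (J ⧸ K)
  choose f hf using fun m : s => kasch hinj m.1
  have hx : ∀ m : s, ∃ x : m.1, f m x ≠ 0 := by
    intro m
    by_contra! h
    exact hf m (LinearMap.ext h)
  choose x hx using hx
  choose G hG using fun m : s => K.mkQ_surjective (E.symm (DFinsupp.single m (x m)))
  have hspan : (Submodule.span A (Set.range G)).map K.mkQ = ⊤ := by
    rw [← Submodule.map_eq_top_iff (e := E), eq_top_iff, ← DFinsupp.iSup_range_lsingle, iSup_le_iff]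
    rintro m _ ⟨y, rfl⟩
    have hxm : x m ≠ 0 := by
      intro h
      apply hx m
      rw [h, map_zero]
    obtain ⟨a, rfl⟩ := IsSimpleModule.toSpanSingleton_surjective A hxm y
    have h1 : (DFinsupp.lsingle m : _ →ₗ[A] Π₀ m : s, m.1) (x m) = E (K.mkQ (G m)) := by
      rw [hG]; simp
    rw [LinearMap.toSpanSingleton_apply, map_smul, h1]
    refine Submodule.smul_mem _ _ (Submodule.mem_map_of_mem (Submodule.mem_map_of_mem ?_))
    exact Submodule.subset_span ⟨m, rfl⟩
  refine ⟨s, fun m => (G m : A), fun X => (DFinsupp.lsum ℕ (fun m : s => if m ∈ X then f m else 0)) ∘ₗ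
    E.toLinearMap ∘ₗ K.mkQ, ?_, ?_⟩
  · apply le_antisymm
    · rw [Ideal.span_le]
      rintro _ ⟨m, rfl⟩
      exact (G m).2
    · apply nilp_nakayama
      intro j hj
      have h1 : K.mkQ ⟨j, hj⟩ ∈ (Submodule.span A (Set.range G)).map K.mkQ := by
        rw [hspan]; trivial
      obtain ⟨y, hy, hyj⟩ := h1
      have h2 : (⟨j, hj⟩ : J) - y ∈ K := by
        rw [← Submodule.ker_mkQ K, LinearMap.mem_ker, map_sub, hyj, sub_self]
      have h3 : ∀ z ∈ K, (z : A) ∈ Ring.jacobson A * Ring.jacobson A := by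
        intro z hz
        refine Submodule.smul_induction_on hz ?_ ?_
        · intro r hr n _
          exact Ideal.mul_mem_mul hr n.2
        · intro a b ha hb
          exact add_mem ha hb
      have h4 : (y : A) ∈ Ideal.span (Set.range fun m => (G m : A)) := by
        have := Submodule.mem_map_of_mem (f := J.subtype) hy
        rw [Submodule.map_span, ← Set.range_comp] at this
        exact this
      have h5 : j = y + (j - y) := by abel
      rw [h5]
      exact Submodule.add_mem_sup h4 (h3 _ h2)
  · intro X Y hXY
    ext m
    have h1 := LinearMap.congr_fun hXY (G m)
    simp only [LinearMap.comp_apply, hG, LinearEquiv.coe_coe, LinearEquiv.apply_symm_apply,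
      DFinsupp.lsum_single] at h1
    have hxm := hx m
    clear hXY hG hspan hx hf
    by_cases hX : m ∈ X <;> by_cases hY : m ∈ Y
    · simp [hX, hY]
    · rw [if_pos hX, if_neg hY] at h1
      exact absurd h1 hxm
    · rw [if_neg hX, if_pos hY] at h1
      exact absurd h1.symm hxm
    · simp [hX, hY]

theorem card_le (s : Type u) (g : s → A) (hg : Ideal.span (Set.range g) = Ring.jacobson A) :
    #A ≤ #(A ⧸ Ring.jacobson A) ⊔ #s ⊔ ℵ₀ := by
  obtain ⟨n, hn⟩ := IsSemiprimaryRing.isNilpotent (R := A)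
  let ρ : A ⧸ Ring.jacobson A → A := Quotient.out
  have hρ : ∀ a : A, a - ρ (Ideal.Quotient.mk _ a) ∈ Ring.jacobson A := by
    intro a
    rw [← Ideal.Quotient.mk_eq_mk_iff_sub_mem]
    exact (Quotient.out_eq _).symm
  let C := Algebra.adjoin ℤ (Set.range ρ ∪ Set.range g)
  have key : ∀ k : ℕ, ∀ a : A, ∃ c ∈ C, a - c ∈ Ring.jacobson A ^ k := by
    intro k
    induction k with
    | zero =>
      intro a
      exact ⟨0, C.zero_mem, by rw [Submodule.pow_zero, Ideal.one_eq_top]; trivial⟩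
    | succ k ih =>
      have hJ : ∀ j ∈ Ring.jacobson A, ∃ c ∈ C, j - c ∈ Ring.jacobson A ^ (k + 1) := by
        intro j hj
        rw [← hg] at hj
        refine Submodule.span_induction (p := fun j _ => ∃ c ∈ C, j - c ∈ Ring.jacobson A ^ (k + 1))
          ?_ ?_ ?_ ?_ hj
        · rintro _ ⟨m, rfl⟩
          exact ⟨g m, Algebra.subset_adjoin (Or.inr ⟨m, rfl⟩), by simp⟩
        · exact ⟨0, C.zero_mem, by simp⟩
        · rintro a b _ _ ⟨c, hc, hac⟩ ⟨d, hd, hbd⟩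
          refine ⟨c + d, C.add_mem hc hd, ?_⟩
          have : a + b - (c + d) = (a - c) + (b - d) := by abel
          rw [this]
          exact add_mem hac hbd
        · rintro a y hy ⟨c, hc, hyc⟩
          obtain ⟨d, hd, had⟩ := ih a
          refine ⟨d * c, C.mul_mem hd hc, ?_⟩
          have : a • y - d * c = (a - d) * y + d * (y - c) := by
            rw [smul_eq_mul, sub_mul, mul_sub]; abel
          rw [this]
          refine add_mem ?_ (Ideal.mul_mem_left _ _ hyc)
          rw [Submodule.pow_succ]
          exact Ideal.mul_mem_mul had (hg ▸ hy)
      intro a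
      obtain ⟨c, hc, h⟩ := hJ _ (hρ a)
      refine ⟨ρ (Ideal.Quotient.mk _ a) + c,
        C.add_mem (Algebra.subset_adjoin (Or.inl ⟨_, rfl⟩)) hc, ?_⟩
      rwa [← sub_sub]
  have htop : ∀ a : A, a ∈ C := by
    intro a
    obtain ⟨c, hc, h⟩ := key n a
    rw [hn] at h
    have : a - c = 0 := by simpa using h
    rwa [sub_eq_zero.1 this]
  have h1 : #A ≤ #C := Cardinal.mk_le_of_injective (f := fun a => (⟨a, htop a⟩ : C))
    (fun a b h => congrArg Subtype.val h)
  have h2 := Algebra.lift_cardinalMk_adjoin_le ℤ (Set.range ρ ∪ Set.range g)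
  simp only [Cardinal.lift_id, Cardinal.lift_uzero, Cardinal.mk_int, Cardinal.lift_aleph0] at h2
  have hle : ℵ₀ ≤ #(A ⧸ Ring.jacobson A) ⊔ #s ⊔ ℵ₀ := le_sup_right
  refine h1.trans (h2.trans (sup_le (sup_le hle ?_) hle))
  refine (Cardinal.mk_union_le _ _).trans (Cardinal.add_le_of_le hle ?_ ?_)
  · exact Cardinal.mk_range_le.trans (le_sup_left.trans le_sup_left)
  · exact Cardinal.mk_range_le.trans (le_sup_right.trans le_sup_left)

end

end FaithQF

/-- A left self-injective semiprimary ring `A` with `|A / Jac(A)| < |A|` is quasi-Frobenius. -/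
theorem faith_qf_of_card_semisimple_quotient_lt
    (A : Type*) [Ring A]
    (hsp : IsSemiprimary A) (hinj : Module.Injective A A)
    (hcard : #(A ⧸ Ideal.jacobson (⊥ : Ideal A)) < #A) :
    IsQuasiFrobenius A := by
  refine ⟨hinj, ?_⟩
  have := FaithQF.isSemiprimaryRing_of A hsp
  rw [Ideal.jacobson_bot] at hcard
  obtain ⟨s, g, F, hg, hF⟩ := FaithQF.structure_lemma hinj
  rw [IsArtinianRing, ← IsSemiprimaryRing.isNoetherian_iff_isArtinian]
  change IsNoetherianRing A
  rw [IsSemiprimaryRing.isNoetherianRing_iff_jacobson_fg]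
  rcases finite_or_infinite s with hfin | hinf
  · exact ⟨(Set.finite_range g).toFinset, by simpa using hg⟩
  · exfalso
    choose a ha using fun X => FaithQF.exists_mul hinj _ (F X)
    have hinja : Function.Injective a := by
      intro X Y h
      apply hF
      ext x
      rw [ha X, ha Y, h]
    have h1 : 2 ^ #s ≤ #A := by
      rw [← Cardinal.mk_set]
      exact Cardinal.mk_le_of_injective hinja
    have h2 := FaithQF.card_le s g hg
    rw [sup_assoc, sup_eq_left.2 (Cardinal.aleph0_le_mk s)] at h2
    rcases le_sup_iff.1 h2 with h | h
    · exact absurd h (not_le.2 hcard)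
    · exact absurd (Cardinal.cantor #s) (not_lt.2 (h1.trans h))
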